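/- arXiv:2109.02835 — 2 statements merged into one kernel-verified Lean document; each statement's English description precedes it below -/
import Mathlib

section
/- For every nonnegative integer k: the group W is finite, and in the group algebra ℤ[ℤ^6] one has 𝒜(Z^ϱ) · WGF(L6'(k);Z) = 𝒜(Z^{kω_{1'} + ϱ}). (By the Weyl character formula, this says that the weight generating function of L6'(k) equals the character char_{E6}(kω_{1'}) of the irreducible highest-weight-kω_{1'} representation of the type E6 simple Lie algebra.) -/
noncomputable section

namespace CL

variable {N : Type} [DecidableEq N] [Fintype N]

/-- One-step relation generating the partial order on the poset of positions. -/
def step (adj : N → N → Prop) (pos : Finset (N × ℕ)) (x y : N × ℕ) : Prop :=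
  x ∈ pos ∧ y ∈ pos ∧ adj x.1 y.1 ∧ y.2 = x.2 + 1

/-- The partial order on positions, generated by `step`. -/
def ple (adj : N → N → Prop) (pos : Finset (N × ℕ)) : N × ℕ → N × ℕ → Prop :=
  Relation.ReflTransGen (step adj pos)

/-- The lattice of `ℕ`-labellings of the positions which are bounded by `k`, order-reversing,
and satisfy a further constraint `extra`. -/
def Elt (adj : N → N → Prop) (pos : Finset (N × ℕ)) (k : ℕ)
    (extra : ({x : N × ℕ // x ∈ pos} → ℕ) → Prop) : Type :=
  {c : {x : N × ℕ // x ∈ pos} → ℕ //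
    (∀ x, c x ≤ k) ∧ (∀ x y, ple adj pos y.1 x.1 → c x ≤ c y) ∧ extra c}

variable {adj : N → N → Prop} {pos : Finset (N × ℕ)} {k : ℕ}
  {extra : ({x : N × ℕ // x ∈ pos} → ℕ) → Prop}

instance : Finite (Elt adj pos k extra) := by
  apply Finite.of_injective
    (fun c : Elt adj pos k extra =>
      fun x => (⟨c.1 x, Nat.lt_succ_of_le (c.2.1 x)⟩ : Fin (k + 1)))
  intro c d h
  apply Subtype.ext
  funext x
  exact congrArg Fin.val (congrFun h x)

instance : Fintype (Elt adj pos k extra) := Fintype.ofFinite _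

instance : DecidableEq (Elt adj pos k extra) := by unfold Elt; infer_instance

/-- Componentwise comparison of labellings. -/
def elLe (r s : Elt adj pos k extra) : Prop := ∀ x, r.1 x ≤ s.1 x

/-- The covering edge of color `i`: exactly one entry, at a position of color `i`,
is increased by one. -/
def edge (i : N) (r s : Elt adj pos k extra) : Prop :=
  ∃ x : {x : N × ℕ // x ∈ pos}, x.1.1 = i ∧ s.1 x = r.1 x + 1 ∧
    ∀ y, y ≠ x → s.1 y = r.1 y

instance (i : N) (r s : Elt adj pos k extra) : Decidable (edge i r s) := by
  unfold edge; infer_instance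

/-- The rank function: the sum of all entries. -/
def rk (t : Elt adj pos k extra) : ℕ := ∑ x ∈ pos.attach, t.1 x

/-- The connected component of `t` in the graph of color-`i` covering edges. -/
def comp (i : N) (t : Elt adj pos k extra) : Set (Elt adj pos k extra) :=
  {s | Relation.ReflTransGen (fun a b => edge i a b ∨ edge i b a) t s}

/-- The integer `m_i(t) = (ρ(t) − min ρ on comp_i(t)) − (max ρ on comp_i(t) − ρ(t))`. -/
def mwt (i : N) (t : Elt adj pos k extra) : ℤ :=
  ((rk t : ℤ) - ((sInf (rk '' comp i t) : ℕ) : ℤ)) -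
    (((sSup (rk '' comp i t) : ℕ) : ℤ) - (rk t : ℤ))

end CL

namespace CL

variable {N : Type} [DecidableEq N] [Fintype N]

/-- The matrix of the simple reflection `S_i : μ ↦ μ − μ_i·(row i of A)`, acting via `mulVec`. -/
def refl (A : N → N → ℤ) (i : N) : Matrix N N ℤ :=
  fun j l => (if j = l then 1 else 0) - (if l = i then A i j else 0)

/-- The Weyl group: the group of integer matrices generated by the simple reflections
(each `S_i` is an involution, so the generated submonoid is a group). -/
def weyl (A : N → N → ℤ) : Submonoid (Matrix N N ℤ) :=
  Submonoid.closure (Set.range (refl A))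

/-- The alternant `𝒜(Z^ν) = Σ_{w∈W} det(w)·Z^{w(ν)}` in the group algebra `ℤ[ℤ^N]`. -/
def alt (A : N → N → ℤ) (ν : N → ℤ) : AddMonoidAlgebra ℤ (N → ℤ) :=
  ∑ᶠ w ∈ (weyl A : Set (Matrix N N ℤ)),
    AddMonoidAlgebra.single (Matrix.mulVec w ν) (Matrix.det w)

end CL

namespace CL

variable {N : Type} [DecidableEq N] [Fintype N]

/-- The weight generating function `WGF(L;Z) = Σ_{t∈L} Z^{wt(t)}` in `ℤ[ℤ^N]`. -/
def wgf (adj : N → N → Prop) (pos : Finset (N × ℕ)) (k : ℕ)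
    (extra : ({x : N × ℕ // x ∈ pos} → ℕ) → Prop) : AddMonoidAlgebra ℤ (N → ℤ) :=
  ∑ t : Elt adj pos k extra, AddMonoidAlgebra.single (fun i => mwt i t) 1

end CL

/-! ### Type `E₆` data -/

/-- The nodes `1', 2', 3', 4', 5', 6'` of the `E₆` Dynkin diagram. -/
inductive N6 : Type
  | m1 | m2 | m3 | m4 | m5 | m6
  deriving DecidableEq

instance : Fintype N6 where
  elems := Finset.mk ↑[N6.m1, N6.m2, N6.m3, N6.m4, N6.m5, N6.m6] (by decide)
  complete := by intro x; cases x <;> decide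

open N6

/-- Adjacency in the `E₆` Dynkin diagram: edges `1'-2', 2'-3', 3'-4', 3'-5', 5'-6'`. -/
abbrev adj6 : N6 → N6 → Prop := fun a b =>
  (a, b) ∈ ([(m1, m2), (m2, m3), (m3, m4), (m3, m5), (m5, m6)] : List (N6 × N6)) ∨
  (b, a) ∈ ([(m1, m2), (m2, m3), (m3, m4), (m3, m5), (m5, m6)] : List (N6 × N6))

/-- The Cartan matrix of type `E₆`, indexed by the nodes. -/
def A6 : N6 → N6 → ℤ := fun i j => if i = j then 2 else if adj6 i j then -1 else 0

/-- The 24 (color, rank) positions of the poset `P24 = 𝒫`. -/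
def pos24 : Finset (N6 × ℕ) :=
  {(m1, 0), (m2, 1), (m3, 2), (m4, 3), (m5, 3), (m3, 4), (m6, 4), (m2, 5), (m5, 5),
   (m1, 6), (m3, 6), (m2, 7), (m4, 7), (m1, 8), (m3, 8), (m2, 9), (m5, 9), (m3, 10),
   (m6, 10), (m4, 11), (m5, 11), (m3, 12), (m2, 13), (m1, 14)}

/-- The 16 (color, rank) positions of the minuscule poset `P16' = P_{E₆}(ω₁')`. -/
def pos16p : Finset (N6 × ℕ) :=
  {(m6, 0), (m5, 1), (m3, 2), (m2, 3), (m4, 3), (m1, 4), (m3, 4), (m2, 5), (m5, 5),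
   (m3, 6), (m6, 6), (m4, 7), (m5, 7), (m3, 8), (m2, 9), (m1, 10)}

/-- The 16 (color, rank) positions of the minuscule poset `P16'' = P_{E₆}(ω₆')`. -/
def pos16pp : Finset (N6 × ℕ) :=
  {(m1, 0), (m2, 1), (m3, 2), (m4, 3), (m5, 3), (m3, 4), (m6, 4), (m2, 5), (m5, 5),
   (m1, 6), (m3, 6), (m2, 7), (m4, 7), (m3, 8), (m5, 9), (m6, 10)}

/-- The extra constraints on elements of `L6(a,b)`: `c((1',8)) ≤ a` and `c((1',6)) ≥ a`. -/
def extra6 (a : ℕ) : ({x : N6 × ℕ // x ∈ pos24} → ℕ) → Prop := fun c =>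
  c ⟨(m1, 8), by decide⟩ ≤ a ∧ a ≤ c ⟨(m1, 6), by decide⟩

/-- The lattice `L6(a,b) = L_{E₆}(aω₁' + bω₆')`. -/
abbrev L6ab (a b : ℕ) : Type := CL.Elt adj6 pos24 (a + b) (extra6 a)

/-- The lattice `L6'(k) = L_{E₆}(kω₁')`. -/
abbrev L6p (k : ℕ) : Type := CL.Elt adj6 pos16p k (fun _ => True)

/-- The lattice `L6''(k) = L_{E₆}(kω₆')`. -/
abbrev L6pp (k : ℕ) : Type := CL.Elt adj6 pos16pp k (fun _ => True)

/-!
The labellings in a color-`i` component agree outside color `i`, and positions of color `i` do not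
cover each other, so that the component is a product of intervals `[lower, upper]`. Hence
`m_i(t) = ∑ (2 t(x) - lower(x) - upper(x))` over the positions `x` of color `i`. In a minuscule
poset `∑ (lower(x) + upper(x))` is, up to a constant, the sum of `t` over the positions of colors
adjacent to `i`, whence an edge of color `i` changes the weight by the simple root `α_i`.

Reversing all the intervals of color `i` therefore acts on weights as the simple reflection `S_i`.
It follows that the weights are permuted by `W`, so that `W` is finite and
`𝒜(Z^ϱ) · WGF = ∑ t, 𝒜(Z^{ϱ + wt t})`. Unless `t` is constantly `k`, let `p` be a position of least
rank with `t(p) < k`, of color `i`. Reversing the intervals of color `i` and then decreasing the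
value at `p` by one is an involution which acts on `ϱ + wt t` as `S_i` and does not change the set
of positions `p` of least rank. As `𝒜` is alternating, all terms but that of the constant labelling
cancel.
-/

namespace CL

open Finset Matrix

section Weyl

variable {N : Type} [DecidableEq N] [Fintype N] {A : N → N → ℤ}

theorem refl_mulVec (A : N → N → ℤ) (i : N) (μ : N → ℤ) : refl A i *ᵥ μ = μ - μ i • A i := by
  ext j
  simp [mulVec, dotProduct, refl, sub_mul, sum_sub_distrib, mul_comm (μ i)]

theorem refl_mem_weyl (A : N → N → ℤ) (i : N) : refl A i ∈ weyl A :=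
  Submonoid.subset_closure ⟨i, rfl⟩

theorem refl_mul_refl {i : N} (hA : A i i = 2) : refl A i * refl A i = 1 := by
  refine ext_of_mulVec_single fun j => ?_
  rw [← mulVec_mulVec, one_mulVec]
  ext l
  simp only [refl_mulVec, Pi.sub_apply, Pi.smul_apply, smul_eq_mul, hA]
  ring

theorem det_refl {i : N} (hA : A i i = 2) : (refl A i).det = -1 := by
  have h : refl A i =
      1 + replicateCol Unit (-A i) * replicateRow Unit (Pi.single i (1 : ℤ)) := by
    ext j l
    by_cases hl : l = i <;> simp [refl, mul_apply, one_apply, hl, sub_eq_add_neg]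
  rw [h, det_one_add_replicateCol_mul_replicateRow]
  simp [hA]

theorem alt_refl_mulVec {i : N} (hA : A i i = 2) (ν : N → ℤ) :
    alt A (refl A i *ᵥ ν) = -alt A ν := by
  have hmul : Set.BijOn (· * refl A i) (weyl A : Set (Matrix N N ℤ)) (weyl A) :=
    Set.InvOn.bijOn (f' := (· * refl A i))
      ⟨fun w _ => by simp [mul_assoc, refl_mul_refl hA],
        fun w _ => by simp [mul_assoc, refl_mul_refl hA]⟩
      (fun _ hw => mul_mem hw (refl_mem_weyl A i)) (fun _ hw => mul_mem hw (refl_mem_weyl A i))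
  calc alt A (refl A i *ᵥ ν)
      = ∑ᶠ w ∈ (weyl A : Set (Matrix N N ℤ)), -AddMonoidAlgebra.single (w *ᵥ ν) w.det := by
        refine finsum_mem_eq_of_bijOn _ hmul fun w _ => ?_
        rw [mulVec_mulVec, det_mul, det_refl hA, mul_neg_one, AddMonoidAlgebra.single_neg, neg_neg]
    _ = -alt A ν := by simp only [alt, finsum_neg_distrib]

variable {ι : Type*} {wt : ι → N → ℤ}

theorem exists_perm_wt_eq_mulVec
    (hwt : ∀ i, ∃ σ : Equiv.Perm ι, ∀ t, wt (σ t) = refl A i *ᵥ wt t)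
    {w : Matrix N N ℤ} (hw : w ∈ weyl A) :
    ∃ σ : Equiv.Perm ι, ∀ t, wt (σ t) = w *ᵥ wt t := by
  induction hw using Submonoid.closure_induction with
  | mem w hw =>
    obtain ⟨i, rfl⟩ := hw
    exact hwt i
  | one => exact ⟨1, fun t => (one_mulVec _).symm⟩
  | mul a b _ _ iha ihb =>
    obtain ⟨σ, hσ⟩ := iha
    obtain ⟨τ, hτ⟩ := ihb
    exact ⟨σ * τ, fun t => by rw [Equiv.Perm.mul_apply, hσ, hτ, mulVec_mulVec]⟩

-- An element of `W` is determined by its values on the simple roots, hence by the permutation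
-- it induces on the weights.
theorem weyl_finite [Finite ι]
    (hwt : ∀ i, ∃ σ : Equiv.Perm ι, ∀ t, wt (σ t) = refl A i *ᵥ wt t)
    (hroot : ∀ i, ∃ s t, wt s - wt t = A i) (hdet : (of A).det ≠ 0) :
    (weyl A : Set (Matrix N N ℤ)).Finite := by
  choose σ hσ using fun w : weyl A => exists_perm_wt_eq_mulVec hwt w.2
  have hσ_inj : Function.Injective σ := by
    refine fun v w hvw => Subtype.ext (ext fun j l => ?_)
    have hwt_eq (t : ι) : v.1 *ᵥ wt t = w.1 *ᵥ wt t := by rw [← hσ, ← hσ, hvw]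
    have hrow : of A *ᵥ (v.1 j - w.1 j) = 0 := by
      ext i
      obtain ⟨s, t, hst⟩ := hroot i
      have hA : (v.1 *ᵥ A i) j = (w.1 *ᵥ A i) j := by
        rw [← hst, mulVec_sub, mulVec_sub, hwt_eq, hwt_eq]
      rw [Pi.zero_apply, mulVec_sub, Pi.sub_apply, sub_eq_zero]
      exact (dotProduct_comm _ _).trans (hA.trans (dotProduct_comm _ _))
    exact sub_eq_zero.1 (congrFun (eq_zero_of_mulVec_eq_zero hdet hrow) l)
  exact Set.finite_coe_iff.1 (Finite.of_injective σ hσ_inj)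

theorem alt_mul_sum_single [Fintype ι] (hfin : (weyl A : Set (Matrix N N ℤ)).Finite)
    (hwt : ∀ i, ∃ σ : Equiv.Perm ι, ∀ t, wt (σ t) = refl A i *ᵥ wt t) (ν : N → ℤ) :
    alt A ν * ∑ t, AddMonoidAlgebra.single (wt t) 1 = ∑ t, alt A (ν + wt t) := by
  simp only [alt, finsum_mem_eq_finite_toFinset_sum _ hfin]
  rw [sum_mul, sum_comm]
  refine sum_congr rfl fun w hw => ?_
  obtain ⟨σ, hσ⟩ := exists_perm_wt_eq_mulVec hwt ((Set.Finite.mem_toFinset _).1 hw)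
  simp only [mul_sum, AddMonoidAlgebra.single_mul_single, mul_one, mulVec_add, ← hσ]
  exact (Equiv.sum_comp σ fun t => AddMonoidAlgebra.single (w *ᵥ ν + wt t) w.det).symm

theorem sum_alt_eq_zero {i : N} (hA : A i i = 2) {s : Finset ι} {τ : ι → ι}
    (hs : ∀ t ∈ s, τ t ∈ s) (hτ : ∀ t ∈ s, τ (τ t) = t)
    (hwt : ∀ t ∈ s, wt (τ t) = refl A i *ᵥ wt t) : ∑ t ∈ s, alt A (wt t) = 0 := by
  have : IsAddTorsionFree (AddMonoidAlgebra ℤ (N → ℤ)) := .of_isTorsionFree ℤ _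
  refine self_eq_neg.1 ?_
  calc ∑ t ∈ s, alt A (wt t) = ∑ t ∈ s, alt A (wt (τ t)) :=
        (sum_nbij' τ τ hs hs hτ hτ fun _ _ => rfl).symm
    _ = -∑ t ∈ s, alt A (wt t) := by
        rw [← sum_neg_distrib]
        exact sum_congr rfl fun t ht => by rw [hwt t ht, alt_refl_mulVec hA]

end Weyl

section Cartan

variable {N : Type} [DecidableEq N] {adj : N → N → Prop} [DecidableRel adj]

/-- The simply-laced generalized Cartan matrix of the Dynkin diagram `adj`. -/
def cartan (adj : N → N → Prop) [DecidableRel adj] : N → N → ℤ :=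
  fun i j => if i = j then 2 else if adj i j then -1 else 0

theorem cartan_self (i : N) : cartan adj i i = 2 :=
  if_pos rfl

theorem cartan_comm [Std.Symm adj] (i j : N) : cartan adj i j = cartan adj j i := by
  simp only [cartan, eq_comm (a := i), comm (r := adj) (a := i)]

end Cartan

variable {N : Type} {adj : N → N → Prop} {pos : Finset (N × ℕ)} {k : ℕ}

section Positions

variable [DecidableRel adj]

/-- The positions of rank `r - 1` whose color is adjacent to `i`. For a position `x = (i, r)` these
are its lower covers, and those for `r + 2` are its upper covers. -/
def nbrsBelow (adj : N → N → Prop) [DecidableRel adj] (pos : Finset (N × ℕ)) (i : N) (r : ℕ) :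
    Finset pos :=
  {y | adj i y.1.1 ∧ y.1.2 + 1 = r}

theorem mem_nbrsBelow_add_two {x y : pos} :
    y ∈ nbrsBelow adj pos x.1.1 (x.1.2 + 2) ↔ step adj pos x y := by
  simp [nbrsBelow, step]

theorem mem_nbrsBelow [Std.Symm adj] {x y : pos} :
    y ∈ nbrsBelow adj pos x.1.1 x.1.2 ↔ step adj pos y x := by
  simp only [nbrsBelow, mem_filter_univ, step, y.2, x.2, true_and, eq_comm]
  exact and_congr_left fun _ => comm

/-- The positions of color `i` just below or just above the rank of `nbrsBelow adj pos i r`. -/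
def flank [DecidableEq N] (pos : Finset (N × ℕ)) (i : N) (r : ℕ) : Finset pos :=
  {x | x.1.1 = i ∧ (x.1.2 + 2 = r ∨ x.1.2 = r)}

theorem card_flank [DecidableEq N] (i : N) (r : ℕ) :
    #(flank pos i r) =
      #{x : pos | x.1.1 = i ∧ x.1.2 + 2 = r} + #{x : pos | x.1.1 = i ∧ x.1.2 = r} := by
  simp only [flank, and_or_left]
  rw [filter_or, card_union_of_disjoint (disjoint_filter.2 fun x _ => by lia)]

/-- A rank by rank form of the conditions which define colored minuscule posets. The positions of
adjacent color between `(i, r - 2)` and `(i, r)` are exactly two in number if both of these occur,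
at most one if only one of them occurs, and none otherwise. Moreover, a position which is not the
last of its color has an upper cover of smaller rank than the later positions of that color. -/
structure IsMinuscule [DecidableEq N] (adj : N → N → Prop) [DecidableRel adj]
    (pos : Finset (N × ℕ)) : Prop where
  card_nbrsBelow_le (i : N) (r : ℕ) : #(nbrsBelow adj pos i r) ≤ #(flank pos i r)
  card_nbrsBelow_eq_two (i : N) (r : ℕ) :
    #(flank pos i r) = 2 → #(nbrsBelow adj pos i r) = 2
  exists_step (x y : pos) :
    x.1.1 = y.1.1 → x.1.2 < y.1.2 → ∃ z : pos, step adj pos x z ∧ z.1.2 < y.1.2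

end Positions

theorem mul_sup_add_mul_fold_min {α : Type*} [DecidableEq α] {B : Finset α} {f : α → ℕ}
    (hf : ∀ y, f y ≤ k) {a b : ℕ} (ha : a ≤ 1) (hb : b ≤ 1) (hle : #B ≤ a + b)
    (htwo : a + b = 2 → #B = 2) :
    a * B.sup f + b * B.fold min k f = ∑ y ∈ B, f y + b * if B = ∅ then k else 0 := by
  obtain hB | hB | hB : #B = 0 ∨ #B = 1 ∨ #B = 2 := by lia
  · obtain rfl := card_eq_zero.1 hB
    simp
  · obtain ⟨y, rfl⟩ := card_eq_one.1 hB
    have hab : a + b = 1 := by lia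
    simp [hf y, ← add_mul, hab]
  · obtain ⟨y, z, hyz, rfl⟩ := card_eq_two.1 hB
    obtain ⟨rfl, rfl⟩ : a = 1 ∧ b = 1 := by lia
    have := hf y
    have := hf z
    rw [sum_pair hyz, if_neg (insert_ne_empty y {z})]
    simp only [sup_insert, sup_singleton, one_mul, fold_insert_idem, fold_singleton, mul_zero,
      add_zero]
    lia

theorem sum_filter_eq_sum_range (p : pos → Prop) [DecidablePred p] (f : pos → ℕ) (c : ℕ) {R : ℕ}
    (hR : ∀ x : pos, x.1.2 + c < R) :
    ∑ x with p x, f x = ∑ r ∈ range R, ∑ x with p x ∧ x.1.2 + c = r, f x := by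
  rw [← sum_fiberwise_of_maps_to (g := fun x : pos => x.1.2 + c) (t := range R)
    fun x _ => mem_range.2 (hR x)]
  simp only [filter_filter]

/-- The order-reversing labellings of the positions by `{0, …, k}`, with no further constraint. -/
abbrev Labelling (adj : N → N → Prop) (pos : Finset (N × ℕ)) (k : ℕ) : Type :=
  Elt adj pos k fun _ => True

namespace Labelling

@[ext]
theorem ext {s t : Labelling adj pos k} (h : ∀ x, s.1 x = t.1 x) : s = t :=
  Subtype.ext (funext h)

theorem le_of_step (t : Labelling adj pos k) {x y : pos} (h : step adj pos x y) : t.1 y ≤ t.1 x :=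
  t.2.2.1 y x (.single h)

/-- A labelling, given by a function of which only the behavior at covering relations is known. -/
def ofStep (f : pos → ℕ) (hk : ∀ x, f x ≤ k)
    (hf : ∀ x y : pos, step adj pos x y → f y ≤ f x) : Labelling adj pos k :=
  ⟨f, hk, fun x y hyx => by
    have le_of_ple : ∀ b, ple adj pos y b → ∀ hb : b ∈ pos, f ⟨b, hb⟩ ≤ f y := by
      intro b h
      induction h with
      | refl => exact fun _ => le_rfl
      | tail _ hbc ih => exact fun hc => (hf ⟨_, hbc.1⟩ ⟨_, hc⟩ hbc).trans (ih hbc.1)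
    exact le_of_ple x hyx x.2, trivial⟩

/-- The constant labelling `k`, the greatest element. -/
def top (adj : N → N → Prop) (pos : Finset (N × ℕ)) (k : ℕ) : Labelling adj pos k :=
  ofStep (fun _ => k) (fun _ => le_rfl) fun _ _ _ => le_rfl

/-- Two labellings agree at all positions whose color is not `i`, as those in one color-`i`
component do. -/
def AgreeOff (i : N) (s t : Labelling adj pos k) : Prop := ∀ x, x.1.1 ≠ i → s.1 x = t.1 x

theorem agreeOff_of_edge {i : N} {s t : Labelling adj pos k} (h : edge i t s) : AgreeOff i s t := by
  obtain ⟨x, rfl, -, h⟩ := h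
  exact fun y hy => h y (ne_of_apply_ne (·.1.1) hy)

theorem agreeOff_of_mem_comp {i : N} {s t : Labelling adj pos k} (h : s ∈ comp i t) :
    AgreeOff i s t := by
  change Relation.ReflTransGen _ t s at h
  induction h with
  | refl => exact fun _ _ => rfl
  | tail _ hbc ih =>
    refine fun x hx => Eq.trans ?_ (ih x hx)
    exact hbc.elim (agreeOff_of_edge · x hx) fun h => (agreeOff_of_edge h x hx).symm

section Bounds

variable [DecidableRel adj]

/-- The least value at `x` compatible with the values of `t` at the other positions. -/
def lower (t : Labelling adj pos k) (x : pos) : ℕ :=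
  (nbrsBelow adj pos x.1.1 (x.1.2 + 2)).sup t.1

/-- The greatest value at `x` compatible with the values of `t` at the other positions. -/
def upper (t : Labelling adj pos k) (x : pos) : ℕ :=
  (nbrsBelow adj pos x.1.1 x.1.2).fold min k t.1

theorem lower_le_iff {t : Labelling adj pos k} {x : pos} {b : ℕ} :
    t.lower x ≤ b ↔ ∀ y : pos, step adj pos x y → t.1 y ≤ b := by
  simp only [lower, Finset.sup_le_iff, mem_nbrsBelow_add_two]

theorem lower_le (t : Labelling adj pos k) (x : pos) : t.lower x ≤ t.1 x :=
  lower_le_iff.2 fun _ => t.le_of_step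

theorem le_lower (t : Labelling adj pos k) {x y : pos} (h : step adj pos x y) :
    t.1 y ≤ t.lower x :=
  lower_le_iff.1 le_rfl y h

section Symm

variable [Std.Symm adj]

theorem le_upper_iff {t : Labelling adj pos k} {x : pos} {b : ℕ} :
    b ≤ t.upper x ↔ b ≤ k ∧ ∀ y : pos, step adj pos y x → b ≤ t.1 y := by
  simp only [upper, le_fold_min, mem_nbrsBelow]

theorem upper_le (t : Labelling adj pos k) (x : pos) : t.upper x ≤ k :=
  (le_upper_iff.1 le_rfl).1

theorem le_upper (t : Labelling adj pos k) (x : pos) : t.1 x ≤ t.upper x :=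
  le_upper_iff.2 ⟨t.2.1 x, fun _ => t.le_of_step⟩

theorem upper_eq_of_forall_le {t : Labelling adj pos k} {x : pos}
    (h : ∀ y : pos, step adj pos y x → k ≤ t.1 y) : t.upper x = k :=
  (t.upper_le x).antisymm (le_upper_iff.2 ⟨le_rfl, h⟩)

end Symm

section Irrefl

variable [Std.Irrefl adj] {i : N} {s t : Labelling adj pos k}

theorem AgreeOff.eq_of_mem_nbrsBelow (h : AgreeOff i s t) {r : ℕ} {y : pos}
    (hy : y ∈ nbrsBelow adj pos i r) : s.1 y = t.1 y :=
  h y (ne_of_irrefl' ((mem_filter_univ y).1 hy).1)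

theorem AgreeOff.lower_eq (h : AgreeOff i s t) {x : pos} (hx : x.1.1 = i) :
    s.lower x = t.lower x := by
  subst hx
  exact sup_congr rfl fun _ => h.eq_of_mem_nbrsBelow

theorem AgreeOff.upper_eq (h : AgreeOff i s t) {x : pos} (hx : x.1.1 = i) :
    s.upper x = t.upper x := by
  subst hx
  exact fold_congr fun _ => h.eq_of_mem_nbrsBelow

end Irrefl

variable [DecidableEq N] [Std.Symm adj] [Std.Irrefl adj] {i : N} {g : pos → ℕ}
  {s t : Labelling adj pos k}

/-- Replace the values of `t` at the positions of color `i` by those of `g`, or by the closest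
admissible values. -/
def recolor (i : N) (g : pos → ℕ) (t : Labelling adj pos k) : Labelling adj pos k :=
  ofStep (fun x => if x.1.1 = i then max (t.lower x) (min (g x) (t.upper x)) else t.1 x)
    (fun x => by
      have := t.2.1 x
      have := t.lower_le x
      have := t.upper_le x
      grind)
    fun x y hxy => by
      have hne : x.1.1 ≠ y.1.1 := ne_of_irrefl hxy.2.2.1
      have hx : t.1 y ≤ t.lower x := t.le_lower hxy
      have hy : t.upper y ≤ t.1 x := (le_upper_iff.1 le_rfl).2 x hxy
      have := t.le_of_step hxy
      have := t.lower_le y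
      have := t.le_upper y
      grind

theorem agreeOff_recolor (i : N) (g : pos → ℕ) (t : Labelling adj pos k) :
    AgreeOff i (recolor i g t) t :=
  fun _ hx => if_neg hx

theorem recolor_apply {x : pos} (hx : x.1.1 = i) (hl : t.lower x ≤ g x) (hu : g x ≤ t.upper x) :
    (recolor i g t).1 x = g x := by
  simp [recolor, ofStep, hx, hl, hu]

end Bounds

section Comp

variable [Std.Symm adj] [Std.Irrefl adj] {i : N} {s t : Labelling adj pos k}

theorem mem_comp_of_le (h : AgreeOff i s t) (hle : ∀ x, t.1 x ≤ s.1 x) : s ∈ comp i t := by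
  classical
  induction hn : rk s using Nat.strong_induction_on generalizing s with
  | _ n ih =>
    by_cases hst : ∃ x, t.1 x < s.1 x
    · obtain ⟨x, hx⟩ := hst
      have hxi : x.1.1 = i := by_contra fun hxi => hx.ne' (h x hxi)
      set u := recolor i (Function.update s.1 x (s.1 x - 1)) s with hu
      have hux : u.1 x = s.1 x - 1 := by
        rw [hu, recolor_apply hxi] <;> rw [Function.update_self]
        · exact (h.lower_eq hxi).trans_le ((t.lower_le x).trans (Nat.le_sub_one_of_lt hx))
        · exact (Nat.sub_le _ _).trans (s.le_upper x)
      have huy (y) (hy : y ≠ x) : u.1 y = s.1 y := by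
        by_cases hyi : y.1.1 = i
        · rw [hu, recolor_apply hyi] <;> rw [Function.update_of_ne hy]
          exacts [s.lower_le y, s.le_upper y]
        · exact agreeOff_recolor _ _ _ y hyi
      have hut (y) : t.1 y ≤ u.1 y ∧ u.1 y ≤ s.1 y := by
        rcases eq_or_ne y x with rfl | hy
        · lia
        · exact ⟨(hle y).trans_eq (huy y hy).symm, (huy y hy).le⟩
      have hus : rk u < rk s := sum_lt_sum (fun y _ => (hut y).2) ⟨x, mem_attach _ _, by lia⟩
      refine (ih _ (hn ▸ hus) (fun y hy => ?_) (fun y => (hut y).1) rfl).tail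
        (.inl ⟨x, hxi, by lia, fun y hy => (huy y hy).symm⟩)
      exact (agreeOff_recolor _ _ _ y hy).trans (h y hy)
    · rw [ext fun x => le_antisymm (not_lt.1 fun hx => hst ⟨x, hx⟩) (hle x)]
      exact .refl

theorem mem_comp_of_ge (h : AgreeOff i s t) (hle : ∀ x, s.1 x ≤ t.1 x) : s ∈ comp i t :=
  have : Std.Symm fun a b : Labelling adj pos k => edge i a b ∨ edge i b a := ⟨fun _ _ => Or.symm⟩
  symm (r := Relation.ReflTransGen _) (mem_comp_of_le (fun x hx => (h x hx).symm) hle)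

end Comp

/-- The positions at which `t` falls short of the greatest labelling `k`, among those only the ones
of least rank. -/
def defects (t : Labelling adj pos k) : Finset pos :=
  {x | t.1 x < k ∧ ∀ y, t.1 y < k → x.1.2 ≤ y.1.2}

section Defects

variable {s t : Labelling adj pos k} {p : pos}

theorem defects_eq_empty_iff : t.defects = ∅ ↔ t = top adj pos k := by
  refine ⟨fun ht => ?_, ?_⟩
  · by_contra hne
    obtain ⟨x, hx⟩ : ∃ x, t.1 x < k := by
      by_contra! h
      exact hne (ext fun x => (t.2.1 x).antisymm (h x))
    obtain ⟨p, hp, hmin⟩ := exists_min_image ({x | t.1 x < k} : Finset pos) (·.1.2)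
      ⟨x, (mem_filter_univ x).2 hx⟩
    simp only [mem_filter_univ] at hp hmin
    exact notMem_empty p (ht ▸ (mem_filter_univ p).2 ⟨hp, hmin⟩)
  · rintro rfl
    simp [defects, top, ofStep]

theorem eq_of_mem_defects (hp : p ∈ t.defects) {x : pos} (hx : x.1.2 < p.1.2) : t.1 x = k :=
  (t.2.1 x).antisymm <| not_lt.1 fun h => hx.not_ge (((mem_filter_univ p).1 hp).2 x h)

theorem upper_eq_of_mem_defects [DecidableRel adj] [Std.Symm adj] (hp : p ∈ t.defects) :
    t.upper p = k :=
  upper_eq_of_forall_le fun y hy => (eq_of_mem_defects hp (by have := hy.2.2.2; lia)).ge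

theorem defects_congr (hp : p ∈ t.defects)
    (hst : ∀ x : pos, x.1.2 ≤ p.1.2 → (s.1 x < k ↔ t.1 x < k)) : s.defects = t.defects := by
  simp only [defects, mem_filter_univ] at hp
  have hps := (hst p le_rfl).2 hp.1
  ext x
  simp only [defects, mem_filter_univ]
  constructor
  · rintro ⟨hx, hmin⟩
    have hxp := hmin p hps
    exact ⟨(hst x hxp).1 hx, fun y hy => hxp.trans (hp.2 y hy)⟩
  · rintro ⟨hx, hmin⟩
    have hxp := hmin p hp.1
    refine ⟨(hst x hxp).2 hx, fun y hy => not_lt.1 fun hyx => ?_⟩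
    exact hyx.not_ge (hmin y ((hst y (hyx.le.trans hxp)).1 hy))

theorem add_single_le_upper [DecidableEq N] [DecidableRel adj] [Std.Symm adj] (hp : p ∈ t.defects)
    (x : pos) : t.1 x + (Pi.single p 1 : pos → ℕ) x ≤ t.upper x := by
  rcases eq_or_ne x p with rfl | hx
  · rw [Pi.single_eq_same, upper_eq_of_mem_defects hp]
    exact ((mem_filter_univ x).1 hp).1
  · rw [Pi.single_eq_of_ne hx]
    exact t.le_upper x

end Defects

theorem rk_sub_rk [DecidableEq N] {i : N} {s t : Labelling adj pos k} (h : AgreeOff i s t) :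
    (rk s : ℤ) - rk t = ∑ x : pos with x.1.1 = i, ((s.1 x : ℤ) - t.1 x) := by
  rw [rk, rk, Nat.cast_sum, Nat.cast_sum, ← sum_sub_distrib, ← univ_eq_attach]
  refine (sum_filter_of_ne fun x _ hx => by_contra fun hxi => hx ?_).symm
  rw [h x hxi, sub_self]

theorem mwt_eq_sum [DecidableRel adj] [DecidableEq N] [Std.Symm adj] [Std.Irrefl adj] (i : N)
    (t : Labelling adj pos k) :
    mwt i t = ∑ x : pos with x.1.1 = i, (2 * t.1 x - t.lower x - t.upper x : ℤ) := by
  set b := recolor i t.lower t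
  set u := recolor i t.upper t
  have hbt : AgreeOff i b t := agreeOff_recolor _ _ _
  have hut : AgreeOff i u t := agreeOff_recolor _ _ _
  have hlu (x) : t.lower x ≤ t.upper x := (t.lower_le x).trans (t.le_upper x)
  have hbx {x : pos} (hx : x.1.1 = i) : b.1 x = t.lower x := recolor_apply hx le_rfl (hlu x)
  have hux {x : pos} (hx : x.1.1 = i) : u.1 x = t.upper x := recolor_apply hx (hlu x) le_rfl
  have hb_le {s : Labelling adj pos k} (hs : AgreeOff i s t) (x) : b.1 x ≤ s.1 x := by
    by_cases hx : x.1.1 = i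
    · exact (hbx hx).trans_le ((hs.lower_eq hx).symm.trans_le (s.lower_le x))
    · exact ((hbt x hx).trans (hs x hx).symm).le
  have hle_u {s : Labelling adj pos k} (hs : AgreeOff i s t) (x) : s.1 x ≤ u.1 x := by
    by_cases hx : x.1.1 = i
    · exact (s.le_upper x).trans_eq ((hs.upper_eq hx).trans (hux hx).symm)
    · exact ((hs x hx).trans (hut x hx).symm).le
  have hmin : IsLeast (rk '' comp i t) (rk b) :=
    ⟨⟨b, mem_comp_of_ge hbt (hb_le fun _ _ => rfl), rfl⟩, Set.forall_mem_image.2 fun s hs =>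
      sum_le_sum fun x _ => hb_le (agreeOff_of_mem_comp hs) x⟩
  have hmax : IsGreatest (rk '' comp i t) (rk u) :=
    ⟨⟨u, mem_comp_of_le hut (hle_u fun _ _ => rfl), rfl⟩, Set.forall_mem_image.2 fun s hs =>
      sum_le_sum fun x _ => hle_u (agreeOff_of_mem_comp hs) x⟩
  calc mwt i t = -((rk b : ℤ) - rk t) - ((rk u : ℤ) - rk t) := by
        rw [mwt, hmin.csInf_eq, hmax.csSup_eq, neg_sub]
    _ = _ := by
        rw [rk_sub_rk hbt, rk_sub_rk hut, ← sum_neg_distrib, ← sum_sub_distrib]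
        refine sum_congr rfl fun x hx => ?_
        rw [hbx ((mem_filter_univ x).1 hx), hux ((mem_filter_univ x).1 hx)]
        ring

section Minuscule

variable [DecidableRel adj] [DecidableEq N]

theorem sum_flank (h : IsMinuscule adj pos) (t : Labelling adj pos k) (i : N) (r : ℕ) :
    ∑ x : pos with x.1.1 = i ∧ x.1.2 + 2 = r, t.lower x +
        ∑ x : pos with x.1.1 = i ∧ x.1.2 = r, t.upper x =
      ∑ y ∈ nbrsBelow adj pos i r, t.1 y +
        ∑ x : pos with x.1.1 = i ∧ x.1.2 = r,
          if nbrsBelow adj pos x.1.1 x.1.2 = ∅ then k else 0 := by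
  have hle := h.card_nbrsBelow_le i r
  have htwo := h.card_nbrsBelow_eq_two i r
  rw [card_flank] at hle htwo
  have hlower : ∀ x ∈ ({x | x.1.1 = i ∧ x.1.2 + 2 = r} : Finset pos),
      t.lower x = (nbrsBelow adj pos i r).sup t.1 := by
    simp +contextual [lower]
  have hupper : ∀ x ∈ ({x | x.1.1 = i ∧ x.1.2 = r} : Finset pos),
      t.upper x = (nbrsBelow adj pos i r).fold min k t.1 := by
    simp +contextual [upper]
  have hmin : ∀ x ∈ ({x | x.1.1 = i ∧ x.1.2 = r} : Finset pos),
      (if nbrsBelow adj pos x.1.1 x.1.2 = ∅ then k else 0) =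
        if nbrsBelow adj pos i r = ∅ then k else 0 := by
    simp +contextual
  rw [sum_eq_card_nsmul hlower, sum_eq_card_nsmul hupper, sum_eq_card_nsmul hmin]
  exact mul_sup_add_mul_fold_min t.2.1 (card_le_one.2 fun x hx y hy => by grind)
    (card_le_one.2 fun x hx y hy => by grind) hle htwo

theorem sum_lower_add_sum_upper (h : IsMinuscule adj pos) (t : Labelling adj pos k) (i : N) :
    ∑ x : pos with x.1.1 = i, t.lower x + ∑ x : pos with x.1.1 = i, t.upper x =
      ∑ y : pos with adj i y.1.1, t.1 y +
        ∑ x : pos with x.1.1 = i, if nbrsBelow adj pos x.1.1 x.1.2 = ∅ then k else 0 := by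
  obtain ⟨R, hR⟩ : ∃ R, ∀ x : pos, x.1.2 + 2 < R :=
    ⟨pos.sup Prod.snd + 3, fun x => by have := le_sup (f := Prod.snd) x.2; lia⟩
  have hR₁ (x : pos) : x.1.2 + 1 < R := Nat.lt_of_succ_lt (hR x)
  have hR₀ (x : pos) : x.1.2 + 0 < R := Nat.lt_of_succ_lt (hR₁ x)
  rw [sum_filter_eq_sum_range _ _ 2 hR, sum_filter_eq_sum_range _ _ 0 hR₀,
    sum_filter_eq_sum_range _ _ 1 hR₁, sum_filter_eq_sum_range _ _ 0 hR₀, ← sum_add_distrib,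
    ← sum_add_distrib]
  exact sum_congr rfl fun r _ => sum_flank h t i r

variable [Std.Symm adj] [Std.Irrefl adj]

theorem mwt_add_sum (h : IsMinuscule adj pos) (t : Labelling adj pos k) (j : N) :
    mwt j t + ∑ x : pos with x.1.1 = j, (if nbrsBelow adj pos x.1.1 x.1.2 = ∅ then k else 0 : ℕ) =
      ∑ x : pos, cartan adj j x.1.1 * t.1 x := by
  have hsum := congrArg (Nat.cast (R := ℤ)) (sum_lower_add_sum_upper h t j)
  have hcartan (x : pos) : cartan adj j x.1.1 * t.1 x =
      (if x.1.1 = j then 2 * t.1 x else 0 : ℤ) - if adj j x.1.1 then (t.1 x : ℤ) else 0 := by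
    by_cases hx : x.1.1 = j
    · simp [cartan, hx, irrefl]
    · simp only [cartan, if_neg hx, if_neg (Ne.symm hx)]
      split_ifs <;> ring
  push_cast at hsum ⊢
  simp only [hcartan, sum_sub_distrib, ← sum_filter, mwt_eq_sum] at hsum ⊢
  lia

/-- The weight `wt(t)`. -/
def wt (t : Labelling adj pos k) : N → ℤ := fun i => mwt i t

theorem AgreeOff.wt_sub_wt (h : IsMinuscule adj pos) {i : N} {s t : Labelling adj pos k}
    (hst : AgreeOff i s t) : s.wt - t.wt = ((rk s : ℤ) - rk t) • cartan adj i := by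
  ext j
  have hdiff : mwt j s - mwt j t = ∑ x : pos, cartan adj j x.1.1 * ((s.1 x : ℤ) - t.1 x) := by
    simp only [mul_sub, sum_sub_distrib, ← mwt_add_sum h, add_sub_add_right_eq_sub]
  rw [Pi.sub_apply, wt, wt, hdiff, rk_sub_rk hst, Pi.smul_apply, smul_eq_mul, sum_mul,
    ← sum_filter_of_ne (p := fun x : pos => x.1.1 = i)]
  · refine sum_congr rfl fun x hx => ?_
    rw [(mem_filter_univ x).1 hx, cartan_comm, mul_comm]
  · exact fun x _ hx => by_contra fun hxi => hx (by rw [hst x hxi, sub_self, mul_zero])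

theorem wt_top (j : N) :
    (top adj pos k).wt j =
      k * #{x : pos | x.1.1 = j ∧ ∀ y : pos, adj j y.1.1 → y.1.2 ≠ x.1.2 + 1} := by
  have hval {x : pos} (hx : x.1.1 = j) :
      (2 * (top adj pos k).1 x - (top adj pos k).lower x - (top adj pos k).upper x : ℤ) =
        if ∀ y : pos, adj j y.1.1 → y.1.2 ≠ x.1.2 + 1 then (k : ℤ) else 0 := by
    rw [upper_eq_of_forall_le fun _ _ => le_rfl, show (top adj pos k).1 x = k from rfl]
    subst hx
    split_ifs with hx
    · have : (top adj pos k).lower x = 0 :=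
        Nat.le_zero.1 (lower_le_iff.2 fun y hxy => absurd hxy.2.2.2 (hx y hxy.2.2.1))
      lia
    · push Not at hx
      obtain ⟨y, hadj, hy⟩ := hx
      have : k ≤ (top adj pos k).lower x := (top adj pos k).le_lower (y := y) ⟨x.2, y.2, hadj, hy⟩
      have : (top adj pos k).lower x ≤ k := (top adj pos k).lower_le x
      lia
  rw [wt, mwt_eq_sum, sum_congr rfl fun x hx => hval ((mem_filter_univ x).1 hx), ← sum_filter,
    filter_filter, sum_const, nsmul_eq_mul, mul_comm]

/-- The labelling obtained from `t` by reversing, at each position of color `i`, the interval of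
values compatible with the other positions, and then decreasing the new value by `δ`. -/
def reflect (i : N) (δ : pos → ℕ) (t : Labelling adj pos k) : Labelling adj pos k :=
  recolor i (fun x => t.lower x + t.upper x - (t.1 x + δ x)) t

section Reflect

variable {i : N} {δ : pos → ℕ} {t : Labelling adj pos k}

theorem agreeOff_reflect (i : N) (δ : pos → ℕ) (t : Labelling adj pos k) :
    AgreeOff i (reflect i δ t) t :=
  agreeOff_recolor _ _ _

theorem reflect_apply {x : pos} (hx : x.1.1 = i) (hδ : t.1 x + δ x ≤ t.upper x) :
    (reflect i δ t).1 x = t.lower x + t.upper x - (t.1 x + δ x) := by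
  have := t.lower_le x
  exact recolor_apply hx (by lia) (by lia)

theorem reflect_reflect (hδ : ∀ x : pos, x.1.1 = i → t.1 x + δ x ≤ t.upper x) :
    reflect i δ (reflect i δ t) = t := by
  have hagree := agreeOff_reflect i δ t
  ext x
  by_cases hx : x.1.1 = i
  · have := hδ x hx
    have := t.lower_le x
    have := hagree.lower_eq hx
    have := hagree.upper_eq hx
    have := reflect_apply hx (hδ x hx)
    rw [reflect_apply hx] <;> lia
  · exact (agreeOff_reflect i δ _ x hx).trans (hagree x hx)

theorem wt_reflect (h : IsMinuscule adj pos)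
    (hδ : ∀ x : pos, x.1.1 = i → t.1 x + δ x ≤ t.upper x) :
    (reflect i δ t).wt = t.wt - (t.wt i + ∑ x : pos with x.1.1 = i, (δ x : ℤ)) • cartan adj i := by
  have hrk : (rk (reflect i δ t) : ℤ) - rk t =
      -(t.wt i + ∑ x : pos with x.1.1 = i, (δ x : ℤ)) := by
    rw [rk_sub_rk (agreeOff_reflect i δ t), wt, mwt_eq_sum, ← sum_add_distrib, ← sum_neg_distrib]
    refine sum_congr rfl fun x hx => ?_
    have hxi := (mem_filter_univ x).1 hx
    have := hδ x hxi
    have := reflect_apply hxi this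
    lia
  rw [eq_add_of_sub_eq ((agreeOff_reflect i δ t).wt_sub_wt h), hrk, neg_smul, neg_add_eq_sub]

theorem exists_perm_wt_eq_refl_mulVec [Fintype N] (h : IsMinuscule adj pos) (k : ℕ) (i : N) :
    ∃ σ : Equiv.Perm (Labelling adj pos k), ∀ t, (σ t).wt = refl (cartan adj) i *ᵥ t.wt := by
  have hδ (t : Labelling adj pos k) (x : pos) (_ : x.1.1 = i) :
      t.1 x + (0 : pos → ℕ) x ≤ t.upper x := t.le_upper x
  have hinv : Function.Involutive (reflect (adj := adj) (k := k) i 0) :=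
    fun t => reflect_reflect (hδ t)
  refine ⟨hinv.toPerm, fun t => ?_⟩
  simp [wt_reflect h (hδ t), refl_mulVec]

theorem defects_reflect (h : IsMinuscule adj pos) {p : pos} (hp : p ∈ t.defects) :
    (reflect p.1.1 (Pi.single p 1) t).defects = t.defects := by
  refine defects_congr hp fun x hxp => ?_
  by_cases hx : x.1.1 = p.1.1
  · have hval := reflect_apply hx (add_single_le_upper hp x)
    rcases hxp.lt_or_eq with hlt | heq
    · obtain ⟨z, hxz, hz⟩ := h.exists_step x p hx hlt
      have := t.le_lower hxz
      have := eq_of_mem_defects hp hz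
      have := eq_of_mem_defects hp hlt
      have := (reflect p.1.1 (Pi.single p 1) t).lower_le x
      have := (agreeOff_reflect p.1.1 (Pi.single p 1) t).lower_eq hx
      lia
    · obtain rfl : x = p := Subtype.ext (Prod.ext hx heq)
      have := ((mem_filter_univ x).1 hp).1
      have := upper_eq_of_mem_defects hp
      have := t.lower_le x
      rw [Pi.single_eq_same] at hval
      lia
  · rw [agreeOff_reflect _ _ t x hx]

end Reflect

theorem exists_wt_sub_wt_eq (h : IsMinuscule adj pos) (x : pos) :
    ∃ s t : Labelling adj pos 1, s.wt - t.wt = cartan adj x.1.1 := by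
  let s : Labelling adj pos 1 := ofStep (fun y => if y.1.2 < x.1.2 ∨ y = x then 1 else 0)
    (fun y => by split_ifs <;> lia) fun y z hyz => by
      have := hyz.2.2.2
      grind
  let t : Labelling adj pos 1 := ofStep (fun y => if y.1.2 < x.1.2 then 1 else 0)
    (fun y => by split_ifs <;> lia) fun y z hyz => by
      have := hyz.2.2.2
      grind
  have hx : s.1 x = t.1 x + 1 := by simp [s, t, ofStep]
  have hne (y) (hy : y ≠ x) : s.1 y = t.1 y := by simp [s, t, ofStep, hy]
  have hst : AgreeOff x.1.1 s t := agreeOff_of_edge ⟨x, rfl, hx, hne⟩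
  have hrk : (rk s : ℤ) - rk t = 1 := by
    rw [rk_sub_rk hst,
      sum_eq_single_of_mem x (by simp) fun y _ hy => by rw [hne y hy, sub_self], hx]
    simp
  exact ⟨s, t, by rw [hst.wt_sub_wt h, hrk, one_smul]⟩

variable [Fintype N]

theorem sum_alt_of_defects_eq (h : IsMinuscule adj pos) {S : Finset pos} (hS : S.Nonempty) :
    ∑ t : Labelling adj pos k with t.defects = S, alt (cartan adj) ((fun _ => 1) + t.wt) = 0 := by
  obtain ⟨p, hpS⟩ := hS
  have hp {t : Labelling adj pos k} (ht : t ∈ ({t | t.defects = S} : Finset _)) : p ∈ t.defects :=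
    (mem_filter_univ t).1 ht ▸ hpS
  refine sum_alt_eq_zero (cartan_self p.1.1) (τ := reflect p.1.1 (Pi.single p 1)) ?_ ?_ ?_
  · exact fun t ht => (mem_filter_univ _).2 <|
      (defects_reflect h (hp ht)).trans ((mem_filter_univ t).1 ht)
  · exact fun t ht => reflect_reflect fun x _ => add_single_le_upper (hp ht) x
  · intro t ht
    have hsum : ∑ x : pos with x.1.1 = p.1.1, ((Pi.single p 1 : pos → ℕ) x : ℤ) = 1 := by
      rw [sum_eq_single_of_mem p (by simp) fun x _ hx => by
        rw [Pi.single_eq_of_ne hx, Nat.cast_zero], Pi.single_eq_same, Nat.cast_one]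
    rw [wt_reflect h fun x _ => add_single_le_upper (hp ht) x, hsum, refl_mulVec, add_sub_assoc,
      Pi.add_apply, add_comm 1]

theorem sum_alt_eq_alt_top (h : IsMinuscule adj pos) :
    ∑ t : Labelling adj pos k, alt (cartan adj) ((fun _ => 1) + t.wt) =
      alt (cartan adj) ((fun _ => 1) + (top adj pos k).wt) := by
  rw [← sum_fiberwise univ defects, Fintype.sum_eq_single ∅ fun S hS =>
    sum_alt_of_defects_eq h (nonempty_iff_ne_empty.2 hS)]
  simp only [defects_eq_empty_iff, filter_eq', mem_univ, if_true, sum_singleton]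

end Minuscule

end Labelling

section E6

instance : Std.Symm adj6 := ⟨fun _ _ => Or.symm⟩

instance : Std.Irrefl adj6 := ⟨by decide⟩

instance : DecidableRel (step adj6 pos16p) := fun x y =>
  inferInstanceAs (Decidable (x ∈ pos16p ∧ y ∈ pos16p ∧ adj6 x.1 y.1 ∧ y.2 = x.2 + 1))

theorem isMinuscule_pos16p : IsMinuscule adj6 pos16p := by
  have hrank : ∀ x : pos16p, x.1.2 ≤ 10 := by decide
  have hcard (i : N6) (r : ℕ) : #(nbrsBelow adj6 pos16p i r) ≤ #(flank pos16p i r) ∧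
      (#(flank pos16p i r) = 2 → #(nbrsBelow adj6 pos16p i r) = 2) := by
    obtain hr | hr := lt_or_ge r 13
    · revert i r
      decide
    · have hnbrs : nbrsBelow adj6 pos16p i r = ∅ :=
        filter_eq_empty_iff.2 fun x _ => by have := hrank x; lia
      have hflank : flank pos16p i r = ∅ :=
        filter_eq_empty_iff.2 fun x _ => by have := hrank x; lia
      rw [hnbrs, hflank]
      decide
  exact ⟨fun i r => (hcard i r).1, fun i r => (hcard i r).2, by decide⟩

theorem det_cartan_adj6_ne_zero : (of (cartan adj6)).det ≠ 0 := by
  intro h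
  obtain ⟨v, hv, hv0⟩ := exists_mulVec_eq_zero_iff.2 h
  refine hv (funext fun j => ?_)
  have hrow (i : N6) : cartan adj6 i m1 * v m1 + cartan adj6 i m2 * v m2 + cartan adj6 i m3 * v m3 +
      cartan adj6 i m4 * v m4 + cartan adj6 i m5 * v m5 + cartan adj6 i m6 * v m6 = 0 := by
    simpa [mulVec, dotProduct, show (univ : Finset N6) = {m1, m2, m3, m4, m5, m6} from rfl,
      add_assoc] using congrFun hv0 i
  have h1 : 2 * v m1 + -1 * v m2 + 0 * v m3 + 0 * v m4 + 0 * v m5 + 0 * v m6 = 0 :=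
    hrow m1
  have h2 : -1 * v m1 + 2 * v m2 + -1 * v m3 + 0 * v m4 + 0 * v m5 + 0 * v m6 = 0 :=
    hrow m2
  have h3 : 0 * v m1 + -1 * v m2 + 2 * v m3 + -1 * v m4 + -1 * v m5 + 0 * v m6 = 0 :=
    hrow m3
  have h4 : 0 * v m1 + 0 * v m2 + -1 * v m3 + 2 * v m4 + 0 * v m5 + 0 * v m6 = 0 :=
    hrow m4
  have h5 : 0 * v m1 + 0 * v m2 + -1 * v m3 + 0 * v m4 + 2 * v m5 + -1 * v m6 = 0 :=
    hrow m5
  have h6 : 0 * v m1 + 0 * v m2 + 0 * v m3 + 0 * v m4 + -1 * v m5 + 2 * v m6 = 0 :=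
    hrow m6
  cases j <;> rw [Pi.zero_apply] <;> lia

theorem card_maximal_pos16p (j : N6) :
    #{x : pos16p | x.1.1 = j ∧ ∀ y : pos16p, adj6 j y.1.1 → y.1.2 ≠ x.1.2 + 1} =
      if j = m1 then 1 else 0 := by
  revert j
  decide

end E6

end CL

open CL Finset Matrix in
theorem statement_5_general {N : Type} [DecidableEq N] [Fintype N] {adj : N → N → Prop}
    [DecidableRel adj] [Std.Symm adj] [Std.Irrefl adj] {pos : Finset (N × ℕ)}
    (h : IsMinuscule adj pos) (hpos : ∀ i, ∃ x : pos, x.1.1 = i)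
    (hdet : (of (cartan adj)).det ≠ 0) (k : ℕ) :
    (weyl (cartan adj) : Set (Matrix N N ℤ)).Finite ∧
      alt (cartan adj) (fun _ => 1) * wgf adj pos k (fun _ => True) =
        alt (cartan adj) fun j =>
          k * #{x : pos | x.1.1 = j ∧ ∀ y : pos, adj j y.1.1 → y.1.2 ≠ x.1.2 + 1} + 1 := by
  have hfin : (weyl (cartan adj) : Set (Matrix N N ℤ)).Finite := by
    refine weyl_finite (Labelling.exists_perm_wt_eq_refl_mulVec h 1) (fun i => ?_) hdet
    obtain ⟨x, rfl⟩ := hpos i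
    exact Labelling.exists_wt_sub_wt_eq h x
  refine ⟨hfin, ?_⟩
  calc alt (cartan adj) (fun _ => 1) * wgf adj pos k (fun _ => True)
      = ∑ t : Labelling adj pos k, alt (cartan adj) ((fun _ => 1) + t.wt) :=
        alt_mul_sum_single hfin (Labelling.exists_perm_wt_eq_refl_mulVec h k) _
    _ = alt (cartan adj) ((fun _ => 1) + (Labelling.top adj pos k).wt) :=
        Labelling.sum_alt_eq_alt_top h
    _ = _ := by
        congr 1
        ext j
        rw [Pi.add_apply, Labelling.wt_top, add_comm]

/-- the Weyl group of `E₆` is finite and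
`𝒜(Z^ϱ)·WGF(L6'(k);Z) = 𝒜(Z^{kω₁'+ϱ})` in `ℤ[ℤ^6]`. -/
theorem statement_5 (k : ℕ) :
    ((CL.weyl A6 : Set (Matrix N6 N6 ℤ)).Finite) ∧
    CL.alt A6 (fun _ => 1) * CL.wgf adj6 pos16p k (fun _ => True) =
      CL.alt A6 (fun j => (if j = m1 then (k : ℤ) else 0) + 1) := by
  have h := statement_5_general CL.isMinuscule_pos16p (by decide) CL.det_cartan_adj6_ne_zero k
  simp only [CL.card_maximal_pos16p, Nat.cast_ite, Nat.cast_one, Nat.cast_zero, mul_ite, mul_one,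
    mul_zero] at h
  exact h

end
end

section
/- Fix a nonnegative integer k and t ∈ L7(k). Let C(t) := {c ∈ L7(k) : c(x) = t(x) for every position x ∈ P7 of color 5' or 6', i.e., for x ∈ {(5',4),(5',6),(5',10),(5',12),(6',5),(6',11)}}, regarded as a poset with the induced order and with each covering relation colored as in L7(k) (all such colors lie in {1,2,3,4,5}). Let S(t) be the skew-tabular lattice with parameters n = 5, m = 9 and boundary functions β0, β1 given by β0(−8) = 0; β0(j) = t((5',12)) for −7 ≤ j ≤ −4; β0(j) = t((5',4)) for −3 ≤ j ≤ 0; β1(−2) = β1(−1) = t((5',10)); β1(0) = β1(1) = t((5',6)); β1(j) = k for 2 ≤ j ≤ 6. Then there is a bijection from C(t) onto S(t) that is an isomorphism of posets and carries covering relations of color i to covering relations of color i for each i ∈ {1,2,3,4,5}. -/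
noncomputable section

/-! ### Type `E₇` data -/

/-- The nodes `1, 2, 3, 4, 5, 5', 6'` of the `E₇` Dynkin diagram. -/
inductive N7 : Type
  | n1 | n2 | n3 | n4 | n5 | n5p | n6p
  deriving DecidableEq

instance : Fintype N7 where
  elems := Finset.mk ([.n1, .n2, .n3, .n4, .n5, .n5p, .n6p] : List N7) (by decide)
  complete := by intro x; cases x <;> decide

open N7

/-- Adjacency in the `E₇` Dynkin diagram: edges `1-2, 2-3, 3-4, 4-5, 4-5', 5'-6'`. -/
abbrev adj7 : N7 → N7 → Prop := fun a b =>
  (a, b) ∈ ([(n1, n2), (n2, n3), (n3, n4), (n4, n5), (n4, n5p), (n5p, n6p)] : List (N7 × N7)) ∨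
  (b, a) ∈ ([(n1, n2), (n2, n3), (n3, n4), (n4, n5), (n4, n5p), (n5p, n6p)] : List (N7 × N7))

/-- The 27 (color, rank) positions of the minuscule poset `P₇ = P_{E₇}(ω₁)`. -/
def pos7 : Finset (N7 × ℕ) :=
  {(n1, 0), (n2, 1), (n3, 2), (n4, 3), (n5, 4), (n5p, 4), (n4, 5), (n6p, 5), (n3, 6),
   (n5p, 6), (n2, 7), (n4, 7), (n1, 8), (n3, 8), (n5, 8), (n2, 9), (n4, 9), (n3, 10),
   (n5p, 10), (n4, 11), (n6p, 11), (n5, 12), (n5p, 12), (n4, 13), (n3, 14), (n2, 15), (n1, 16)}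

/-- The lattice `L7(k) = L_{E₇}(kω₁)` of order-reversing labellings of `P₇` by `{0,…,k}`. -/
abbrev L7 (k : ℕ) : Type := CL.Elt adj7 pos7 k (fun _ => True)

/-- The Cartan matrix of type `E₇`, indexed by the nodes. -/
def A7 : N7 → N7 → ℤ := fun i j => if i = j then 2 else if adj7 i j then -1 else 0

/-! ### Skew-tabular lattices -/

namespace ST

/-- Index positions of a GT parallelogram: rows `0,…,n+1`, row `i` having
columns `C_i = {i, i−1, …, i−(m−1)}`. -/
def Idx (n m : ℕ) : Type :=
  {p : ℕ × ℤ // p.1 ≤ n + 1 ∧ (p.1 : ℤ) - ((m : ℤ) - 1) ≤ p.2 ∧ p.2 ≤ (p.1 : ℤ)}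

/-- The skew-tabular lattice with boundary rows `β0` (row `0`) and `β1` (row `n+1`):
arrays of nonnegative integers weakly increasing along NW-to-SE and NE-to-SW diagonals. -/
def Elt (n m : ℕ) (β0 β1 : ℤ → ℕ) : Type :=
  {g : Idx n m → ℕ //
    (∀ p : Idx n m, p.1.1 = 0 → g p = β0 p.1.2) ∧
    (∀ p : Idx n m, p.1.1 = n + 1 → g p = β1 p.1.2) ∧
    (∀ p q : Idx n m, q.1.1 = p.1.1 + 1 → q.1.2 = p.1.2 → g q ≤ g p) ∧
    (∀ p q : Idx n m, q.1.1 = p.1.1 + 1 → q.1.2 = p.1.2 + 1 → g p ≤ g q)}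

variable {n m : ℕ} {β0 β1 : ℤ → ℕ}

/-- Componentwise comparison of arrays. -/
def le (r s : Elt n m β0 β1) : Prop := ∀ p, r.1 p ≤ s.1 p

/-- The covering edge of color `i`: exactly one entry, in row `i`, is increased by one. -/
def edge (i : ℕ) (r s : Elt n m β0 β1) : Prop :=
  ∃ p : Idx n m, p.1.1 = i ∧ s.1 p = r.1 p + 1 ∧ ∀ q, q ≠ p → s.1 q = r.1 q

/-- The entry of an array at `(i, j)` (junk value `0` outside the index set). -/
def ent (g : Elt n m β0 β1) (i : ℕ) (j : ℤ) : ℕ :=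
  if h : i ≤ n + 1 ∧ (i : ℤ) - ((m : ℤ) - 1) ≤ j ∧ j ≤ (i : ℤ) then g.1 ⟨(i, j), h⟩ else 0

/-- The rank function: the sum of all entries in rows `1,…,n`. -/
def rk (g : Elt n m β0 β1) : ℕ :=
  ∑ i ∈ Finset.range (n + 2), ∑ u ∈ Finset.range m,
    if 1 ≤ i ∧ i ≤ n then ent g i ((i : ℤ) - (u : ℤ)) else 0

/-- The connected component of `g` in the graph of color-`i` covering edges. -/
def comp (i : ℕ) (g : Elt n m β0 β1) : Set (Elt n m β0 β1) :=
  {s | Relation.ReflTransGen (fun x y => edge i x y ∨ edge i y x) g s}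

/-- The integer `m_i(g) = (ρ(g) − min ρ on comp_i(g)) − (max ρ on comp_i(g) − ρ(g))`. -/
def mwt (i : ℕ) (g : Elt n m β0 β1) : ℤ :=
  ((rk g : ℤ) - ((sInf (rk '' comp i g) : ℕ) : ℤ)) -
    (((sSup (rk '' comp i g) : ℕ) : ℤ) - (rk g : ℤ))

end ST

/-- The `J₅`-component `C(t)`: elements of `L7(k)` agreeing with `t` at all positions of
color `5'` or `6'`. -/
def Ct8 (k : ℕ) (t : L7 k) : Type :=
  {c : L7 k // ∀ x : {x : N7 × ℕ // x ∈ pos7}, x.1.1 = n5p ∨ x.1.1 = n6p → c.1 x = t.1 x}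

/-! ### The isomorphism

The array inequalities say that an array is monotone for the product order in the coordinates
`(j, j - i)` of its positions. Put the label of a position of color `i ≤ 5` and rank `q` at the
entry `(i, j)` with `j = (i + 1 - q) / 2`: two colors of the subdiagram are adjacent exactly when
their rows are, and the steps of `P₇` between such colors become the two kinds of array
inequalities. The steps between the colors `4` and `5'` become inequalities with boundary entries,
and every entry that receives no label lies, in the product order, between two boundary entries
that hold the same value in every array, so it carries no information.
-/

namespace CL

section Decidability

variable {N : Type} {adj : N → N → Prop} {pos : Finset (N × ℕ)}

/-- The existence of a chain of exactly `d` steps from `x` to `y`. Unlike `ple`, it is decidable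
by recursion on `d`. -/
def reachesIn (adj : N → N → Prop) (pos : Finset (N × ℕ)) : ℕ → N × ℕ → N × ℕ → Prop
  | 0, x, y => x = y
  | d + 1, x, y => ∃ a, step adj pos x (a, x.2 + 1) ∧ reachesIn adj pos d (a, x.2 + 1) y

theorem rank_le_of_ple {x y : N × ℕ} (h : ple adj pos x y) : x.2 ≤ y.2 := by
  induction h with
  | refl => exact le_rfl
  | tail _ hstep ih => exact ih.trans (hstep.2.2.2 ▸ Nat.le_succ _)

theorem ple_of_reachesIn {d : ℕ} {x y : N × ℕ} (h : reachesIn adj pos d x y) :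
    ple adj pos x y := by
  induction d generalizing x with
  | zero =>
    rw [show x = y from h]
    exact Relation.ReflTransGen.refl
  | succ d ih =>
    obtain ⟨a, hstep, hrest⟩ := h
    exact (ih hrest).head hstep

theorem reachesIn_of_ple {x y : N × ℕ} (h : ple adj pos x y) :
    reachesIn adj pos (y.2 - x.2) x y := by
  induction h using Relation.ReflTransGen.head_induction_on with
  | refl => simp only [Nat.sub_self, reachesIn]
  | @head x z hstep hrest ih =>
    obtain ⟨a, r⟩ := z
    obtain rfl : r = x.2 + 1 := hstep.2.2.2
    have hlength : y.2 - x.2 = y.2 - (x.2 + 1) + 1 := by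
      have : x.2 + 1 ≤ y.2 := rank_le_of_ple hrest
      omega
    rw [hlength]
    exact ⟨a, hstep, ih⟩

theorem ple_iff_reachesIn {x y : N × ℕ} :
    ple adj pos x y ↔ reachesIn adj pos (y.2 - x.2) x y :=
  ⟨reachesIn_of_ple, ple_of_reachesIn⟩

variable [DecidableEq N] [DecidableRel adj]

instance decidableStep (x y : N × ℕ) : Decidable (step adj pos x y) := by
  unfold step; infer_instance

variable [Fintype N]

instance decidableReachesIn : ∀ d x y, Decidable (reachesIn adj pos d x y)
  | 0, x, y => inferInstanceAs (Decidable (x = y))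
  | d + 1, x, y =>
    have := fun z => decidableReachesIn d z y
    inferInstanceAs (Decidable (∃ a, step adj pos x (a, x.2 + 1) ∧
      reachesIn adj pos d (a, x.2 + 1) y))

instance decidablePle (x y : N × ℕ) : Decidable (ple adj pos x y) :=
  decidable_of_iff' _ ple_iff_reachesIn

end Decidability

theorem antitone_of_step {N : Type} {α : Type*} [Preorder α] {adj : N → N → Prop}
    {pos : Finset (N × ℕ)} {f : {x // x ∈ pos} → α}
    (hf : ∀ x y, y.1.2 = x.1.2 + 1 → adj x.1.1 y.1.1 → f y ≤ f x)
    {x y : {x // x ∈ pos}} (hxy : ple adj pos x.1 y.1) : f y ≤ f x := by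
  obtain ⟨x, hx⟩ := x
  obtain ⟨y, hy⟩ := y
  change ple adj pos x y at hxy
  induction hxy with
  | refl => exact le_rfl
  | @tail z y _ hstep ih =>
    obtain ⟨hz, -, hadj, hrank⟩ := hstep
    exact (hf ⟨z, hz⟩ ⟨y, hy⟩ hrank hadj).trans (ih hz)

end CL

namespace ST

variable {n m : ℕ} {β0 β1 : ℤ → ℕ}

/-- The order on array positions for which arrays are the monotone functions: the two families
of array inequalities raise `j - i` by one keeping `j`, respectively `j` by one keeping `j - i`,
so they generate the product order in the coordinates `(j, j - i)`. -/
instance : Preorder (Idx n m) :=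
  Preorder.lift fun p => (p.1.2, p.1.2 - (p.1.1 : ℤ))

theorem Idx.le_iff {p q : Idx n m} :
    p ≤ q ↔ p.1.2 ≤ q.1.2 ∧ p.1.2 - (p.1.1 : ℤ) ≤ q.1.2 - (q.1.1 : ℤ) :=
  Iff.rfl

instance (p q : Idx n m) : Decidable (p ≤ q) :=
  decidable_of_iff' _ Idx.le_iff

instance : DecidableEq (Idx n m) :=
  inferInstanceAs (DecidableEq (Subtype _))

/-- The row and the offset from the right end of that row, as coordinates on array positions. -/
def Idx.equivRowOffset (n m : ℕ) : Idx n m ≃ Fin (n + 2) × Fin m where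
  toFun p := (⟨p.1.1, by have := p.2.1; omega⟩,
    ⟨((p.1.1 : ℤ) - p.1.2).toNat, by have := p.2.2; omega⟩)
  invFun a := ⟨(a.1, (a.1 : ℤ) - (a.2 : ℤ)), by dsimp only; omega⟩
  left_inv p := by
    have := p.2.2
    refine Subtype.ext (Prod.ext rfl ?_)
    dsimp only
    omega
  right_inv a := by
    refine Prod.ext rfl (Fin.ext ?_)
    dsimp only
    omega

instance : Fintype (Idx n m) :=
  Fintype.ofEquiv _ (Idx.equivRowOffset n m).symm

/-- The steps of the order on `Idx n m` never have to leave the parallelogram. -/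
theorem Elt.monotone (g : Elt n m β0 β1) : Monotone g.1 := by
  intro p q hpq
  rw [Idx.le_iff] at hpq
  obtain ⟨d, hd⟩ : ∃ d : ℕ, (d : ℤ) = 2 * (q.1.2 - p.1.2) + (p.1.1 - q.1.1) :=
    ⟨(2 * (q.1.2 - p.1.2) + (p.1.1 - q.1.1)).toNat, by omega⟩
  have hp := p.2
  have hq := q.2
  induction d generalizing p with
  | zero =>
    have hrow : p.1.1 = q.1.1 := by omega
    have hcolumn : p.1.2 = q.1.2 := by omega
    exact (congrArg g.1 (Subtype.ext (Prod.ext hrow hcolumn))).le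
  | succ d ih =>
    by_cases hdiagonal : p.1.2 < q.1.2 ∧ p.1.1 ≤ n
    · obtain ⟨r, hrow, hcolumn⟩ : ∃ r : Idx n m, r.1.1 = p.1.1 + 1 ∧ r.1.2 = p.1.2 + 1 :=
        ⟨⟨(p.1.1 + 1, p.1.2 + 1), by dsimp only; omega⟩, rfl, rfl⟩
      have hpr : g.1 p ≤ g.1 r := g.2.2.2.2 p r hrow hcolumn
      exact hpr.trans (ih (by omega) (by omega) r.2)
    · obtain ⟨r, hrow, hcolumn⟩ : ∃ r : Idx n m, p.1.1 = r.1.1 + 1 ∧ p.1.2 = r.1.2 :=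
        ⟨⟨(p.1.1 - 1, p.1.2), by dsimp only; omega⟩, by dsimp only; omega, rfl⟩
      have hpr : g.1 p ≤ g.1 r := g.2.2.2.1 r p hrow hcolumn
      exact hpr.trans (ih (by omega) (by omega) r.2)

end ST

/-- What an entry of an array built from a labelling can hold: the constant `0`, the label of a
position, or the bound `k` on all labels (`top`). -/
inductive Source {N : Type} (pos : Finset (N × ℕ)) : Type
  | zero
  | label (x : {x // x ∈ pos})
  | top
  deriving DecidableEq

namespace Source

variable {N : Type} {adj : N → N → Prop} {pos : Finset (N × ℕ)} {k : ℕ}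
  {extra : ({x // x ∈ pos} → ℕ) → Prop} {fixed : N → Prop}

/-- The number a source stands for, given a labelling `c`. -/
def value (c : CL.Elt adj pos k extra) : Source pos → ℕ
  | zero => 0
  | label x => c.1 x
  | top => k

/-- The order on sources that holds between the values for every labelling: since labellings
reverse the order of positions, so does this order. -/
def Below (adj : N → N → Prop) : Source pos → Source pos → Prop
  | zero, _ => True
  | _, top => True
  | label x, label y => CL.ple adj pos y.1 x.1
  | _, _ => False

instance [DecidableEq N] [Fintype N] [DecidableRel adj] :
    ∀ r s : Source pos, Decidable (Below adj r s)
  | zero, _ => isTrue trivial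
  | label _, top | top, top => isTrue trivial
  | label x, label y => inferInstanceAs (Decidable (CL.ple adj pos y.1 x.1))
  | label _, zero | top, zero | top, label _ => isFalse id

/-- A source whose value is the same for all labellings that agree on the positions with color
in `fixed`. -/
def IsFixed (fixed : N → Prop) : Source pos → Prop
  | label x => fixed x.1.1
  | _ => True

instance [DecidablePred fixed] : ∀ s : Source pos, Decidable (IsFixed fixed s)
  | zero | top => isTrue trivial
  | label x => inferInstanceAs (Decidable (fixed x.1.1))

theorem value_le (c : CL.Elt adj pos k extra) : ∀ s : Source pos, s.value c ≤ k
  | zero => Nat.zero_le k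
  | label x => c.2.1 x
  | top => le_rfl

theorem Below.value_le_value {r s : Source pos} (h : Below adj r s)
    (c : CL.Elt adj pos k extra) : r.value c ≤ s.value c :=
  match r, s, h with
  | zero, _, _ => Nat.zero_le _
  | r, top, _ => r.value_le c
  | label x, label y, h => c.2.2.1 x y h

theorem IsFixed.value_congr {s : Source pos} (hs : s.IsFixed fixed)
    {c d : CL.Elt adj pos k extra} (hcd : ∀ x, fixed x.1.1 → c.1 x = d.1 x) :
    s.value c = s.value d :=
  match s, hs with
  | zero, _ | top, _ => rfl
  | label x, hx => hcd x hx

theorem isFixed_or_exists_label (fixed : N → Prop) :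
    ∀ s : Source pos, s.IsFixed fixed ∨ ∃ x, ¬ fixed x.1.1 ∧ s = label x
  | zero | top => Or.inl trivial
  | label x => (em (fixed x.1.1)).imp_right fun hx => ⟨x, hx, rfl⟩

end Source

/-- The labellings that agree with `t` at all positions with color in `fixed`. -/
abbrev FixedComponent {N : Type} {adj : N → N → Prop} {pos : Finset (N × ℕ)} {k : ℕ}
    (fixed : N → Prop) (t : CL.Elt adj pos k fun _ => True) : Type :=
  {c : CL.Elt adj pos k fun _ => True // ∀ x, fixed x.1.1 → c.1 x = t.1 x}

/-- A way to write the labellings of `pos` as arrays with rows `0, …, n + 1` of length `m`: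
`source p` says what goes to entry `p`, and `target x` is the only entry that holds the label of a
position `x` with color not in `fixed` (for the other positions, `target` is irrelevant). An entry
with a fixed source is enclosed by boundary entries with the same source, which forces its value,
and the steps of `pos` not between fixed positions are witnessed by comparable entries. -/
structure ArrayLayout {N : Type} (adj : N → N → Prop) (pos : Finset (N × ℕ)) (fixed : N → Prop)
    (n m : ℕ) where
  source : ST.Idx n m → Source pos
  target : {x // x ∈ pos} → ST.Idx n m
  source_eq_label_iff : ∀ x, ¬ fixed x.1.1 → ∀ p, source p = .label x ↔ p = target x
  source_below_of_column : ∀ p q : ST.Idx n m, q.1.1 = p.1.1 + 1 → q.1.2 = p.1.2 →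
    (source q).Below adj (source p)
  source_below_of_diagonal : ∀ p q : ST.Idx n m, q.1.1 = p.1.1 + 1 → q.1.2 = p.1.2 + 1 →
    (source p).Below adj (source q)
  isFixed_boundary : ∀ p, p.1.1 = 0 ∨ p.1.1 = n + 1 → (source p).IsFixed fixed
  exists_boundary_le : ∀ p, (source p).IsFixed fixed →
    ∃ a ≤ p, (a.1.1 = 0 ∨ a.1.1 = n + 1) ∧ source a = source p
  exists_le_boundary : ∀ p, (source p).IsFixed fixed →
    ∃ b, p ≤ b ∧ (b.1.1 = 0 ∨ b.1.1 = n + 1) ∧ source b = source p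
  exists_le_top : ∀ p, ∃ q, p ≤ q ∧ source q = .top
  exists_le_of_step : ∀ x y : {x // x ∈ pos}, y.1.2 = x.1.2 + 1 → adj x.1.1 y.1.1 →
    fixed x.1.1 ∧ fixed y.1.1 ∨ ∃ p, source p = .label x ∧ ∃ q ≤ p, source q = .label y

namespace ArrayLayout

variable {N : Type} {adj : N → N → Prop} {pos : Finset (N × ℕ)} {fixed : N → Prop} {n m k : ℕ}
  {β0 β1 : ℤ → ℕ} {t : CL.Elt adj pos k fun _ => True} (L : ArrayLayout adj pos fixed n m)

/-- The boundary rows `β0` and `β1` are those that the layout produces from `t`. -/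
def HasBoundary (t : CL.Elt adj pos k fun _ => True) (β0 β1 : ℤ → ℕ) : Prop :=
  (∀ p, p.1.1 = 0 → (L.source p).value t = β0 p.1.2) ∧
    ∀ p, p.1.1 = n + 1 → (L.source p).value t = β1 p.1.2

theorem target_injOn : Set.InjOn L.target {x | ¬ fixed x.1.1} := by
  intro x hx y hy hxy
  have hsource : L.source (L.target x) = .label x := (L.source_eq_label_iff x hx _).2 rfl
  rw [(L.source_eq_label_iff y hy _).2 hxy] at hsource
  exact (Source.label.inj hsource).symm

variable {L}

section Embedding

variable (h : L.HasBoundary t β0 β1)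

/-- The array that `L` makes of a labelling. -/
def toArray (c : FixedComponent fixed t) : ST.Elt n m β0 β1 :=
  have value_eq (p : ST.Idx n m) (hp : p.1.1 = 0 ∨ p.1.1 = n + 1) :
      (L.source p).value c.1 = (L.source p).value t :=
    (L.isFixed_boundary p hp).value_congr c.2
  ⟨fun p => (L.source p).value c.1,
    fun p hp => (value_eq p (.inl hp)).trans (h.1 p hp),
    fun p hp => (value_eq p (.inr hp)).trans (h.2 p hp),
    fun p q hrow hcolumn => (L.source_below_of_column p q hrow hcolumn).value_le_value c.1,
    fun p q hrow hcolumn => (L.source_below_of_diagonal p q hrow hcolumn).value_le_value c.1⟩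

theorem toArray_target (c : FixedComponent fixed t) {x : {x // x ∈ pos}} (hx : ¬ fixed x.1.1) :
    (toArray h c).1 (L.target x) = c.1.1 x :=
  congrArg (Source.value c.1) ((L.source_eq_label_iff x hx _).2 rfl)

theorem toArray_eq_or_eq_target (c d : FixedComponent fixed t) (p : ST.Idx n m) :
    (toArray h c).1 p = (toArray h d).1 p ∨ ∃ x, ¬ fixed x.1.1 ∧ p = L.target x :=
  ((L.source p).isFixed_or_exists_label fixed).imp
    (fun hp => (hp.value_congr c.2).trans (hp.value_congr d.2).symm)
    fun ⟨x, hx, hp⟩ => ⟨x, hx, (L.source_eq_label_iff x hx p).1 hp⟩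

theorem elLe_iff (c d : FixedComponent fixed t) :
    CL.elLe c.1 d.1 ↔ ST.le (toArray h c) (toArray h d) := by
  constructor
  · intro hcd p
    obtain hp | ⟨x, hx, rfl⟩ := toArray_eq_or_eq_target h c d p
    · exact hp.le
    · simpa only [toArray_target h _ hx] using hcd x
  · intro hcd x
    by_cases hx : fixed x.1.1
    · rw [c.2 x hx, d.2 x hx]
    · simpa only [toArray_target h _ hx] using hcd (L.target x)

theorem toArray_injective : Function.Injective (toArray h) := by
  intro c d hcd
  have hle (x) : c.1.1 x ≤ d.1.1 x := (elLe_iff h c d).2 (fun p => by rw [hcd]) x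
  have hge (x) : d.1.1 x ≤ c.1.1 x := (elLe_iff h d c).2 (fun p => by rw [hcd]) x
  exact Subtype.ext (Subtype.ext (funext fun x => (hle x).antisymm (hge x)))

theorem edge_iff {a : N} {i : ℕ} (ha : ¬ fixed a)
    (hai : ∀ x, ¬ fixed x.1.1 → ((L.target x).1.1 = i ↔ x.1.1 = a))
    (c d : FixedComponent fixed t) :
    CL.edge a c.1 d.1 ↔ ST.edge i (toArray h c) (toArray h d) := by
  constructor
  · rintro ⟨x, rfl, hup, hother⟩
    refine ⟨L.target x, (hai x ha).2 rfl, by simpa only [toArray_target h _ ha] using hup, ?_⟩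
    intro q hq
    obtain hcd | ⟨y, hy, rfl⟩ := toArray_eq_or_eq_target h d c q
    · exact hcd
    · simpa only [toArray_target h _ hy] using hother y (ne_of_apply_ne L.target hq)
  · rintro ⟨p, hp, hup, hother⟩
    obtain hcd | ⟨x, hx, rfl⟩ := toArray_eq_or_eq_target h d c p
    · omega
    refine ⟨x, (hai x hx).1 hp, by simpa only [toArray_target h _ hx] using hup, ?_⟩
    intro y hyx
    by_cases hy : fixed y.1.1
    · rw [c.2 y hy, d.2 y hy]
    · have hne : L.target y ≠ L.target x := L.target_injOn.ne hy hx hyx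
      simpa only [toArray_target h _ hy] using hother _ hne

end Embedding

section Surjectivity

variable (L) in
open Classical in
/-- The labelling read off from an array `g`, completed by the labels of `t` at the positions with
color in `fixed`. -/
def readLabel (t : CL.Elt adj pos k fun _ => True) (g : ST.Elt n m β0 β1)
    (x : {x // x ∈ pos}) : ℕ :=
  if fixed x.1.1 then t.1 x else g.1 (L.target x)

theorem apply_boundary (h : L.HasBoundary t β0 β1) (g : ST.Elt n m β0 β1) {p : ST.Idx n m}
    (hp : p.1.1 = 0 ∨ p.1.1 = n + 1) : g.1 p = (L.source p).value t := by
  rcases hp with hp | hp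
  · rw [g.2.1 p hp, h.1 p hp]
  · rw [g.2.2.1 p hp, h.2 p hp]

theorem apply_of_isFixed (h : L.HasBoundary t β0 β1) (g : ST.Elt n m β0 β1) {p : ST.Idx n m}
    (hp : (L.source p).IsFixed fixed) : g.1 p = (L.source p).value t := by
  obtain ⟨a, hap, ha, hsource_a⟩ := L.exists_boundary_le p hp
  obtain ⟨b, hpb, hb, hsource_b⟩ := L.exists_le_boundary p hp
  apply le_antisymm
  · simpa only [apply_boundary h g hb, hsource_b] using g.monotone hpb
  · simpa only [apply_boundary h g ha, hsource_a] using g.monotone hap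

theorem apply_le (h : L.HasBoundary t β0 β1) (g : ST.Elt n m β0 β1) (p : ST.Idx n m) :
    g.1 p ≤ k := by
  obtain ⟨q, hpq, hq⟩ := L.exists_le_top p
  have hgq : g.1 q = k := by
    rw [apply_of_isFixed h g (hq ▸ trivial), hq]
    rfl
  exact hgq ▸ g.monotone hpq

theorem readLabel_of_source_eq (h : L.HasBoundary t β0 β1) (g : ST.Elt n m β0 β1)
    {p : ST.Idx n m} {x : {x // x ∈ pos}} (hp : L.source p = .label x) :
    L.readLabel t g x = g.1 p := by
  unfold readLabel
  split_ifs with hx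
  · rw [apply_of_isFixed h g (hp ▸ hx), hp]
    rfl
  · rw [(L.source_eq_label_iff x hx p).1 hp]

theorem readLabel_le (h : L.HasBoundary t β0 β1) (g : ST.Elt n m β0 β1) (x : {x // x ∈ pos}) :
    L.readLabel t g x ≤ k := by
  unfold readLabel
  split_ifs
  · exact t.2.1 x
  · exact apply_le h g _

theorem readLabel_antitone_of_step (h : L.HasBoundary t β0 β1) (g : ST.Elt n m β0 β1)
    {x y : {x // x ∈ pos}} (hrank : y.1.2 = x.1.2 + 1) (hadj : adj x.1.1 y.1.1) :
    L.readLabel t g y ≤ L.readLabel t g x := by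
  obtain ⟨hx, hy⟩ | ⟨p, hp, q, hqp, hq⟩ := L.exists_le_of_step x y hrank hadj
  · simpa only [readLabel, if_pos hx, if_pos hy] using
      t.2.2.1 y x (.single ⟨x.2, y.2, hadj, hrank⟩)
  · rw [readLabel_of_source_eq h g hp, readLabel_of_source_eq h g hq]
    exact g.monotone hqp

/-- The preimage of an array under `toArray`. -/
def ofArray (h : L.HasBoundary t β0 β1) (g : ST.Elt n m β0 β1) : FixedComponent fixed t :=
  ⟨⟨L.readLabel t g, readLabel_le h g,
    fun _ _ hyx => CL.antitone_of_step (fun _ _ => readLabel_antitone_of_step h g) hyx, trivial⟩,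
    fun _ hx => if_pos hx⟩

theorem toArray_ofArray (h : L.HasBoundary t β0 β1) (g : ST.Elt n m β0 β1) :
    toArray h (ofArray h g) = g := by
  refine Subtype.ext (funext fun p => ?_)
  obtain hp | ⟨x, -, hp⟩ := (L.source p).isFixed_or_exists_label fixed
  · exact (hp.value_congr (ofArray h g).2).trans (apply_of_isFixed h g hp).symm
  · calc (L.source p).value (ofArray h g).1
        = L.readLabel t g x := by rw [hp]; rfl
      _ = g.1 p := readLabel_of_source_eq h g hp

theorem toArray_bijective (h : L.HasBoundary t β0 β1) : Function.Bijective (toArray h) :=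
  ⟨toArray_injective h, fun g => ⟨ofArray h g, toArray_ofArray h g⟩⟩

end Surjectivity

end ArrayLayout

namespace N7

/-- The colors outside the subdiagram `J₅ = {1, 2, 3, 4, 5}`. -/
abbrev IsPrimed (a : N7) : Prop := a = n5p ∨ a = n6p

/-- The array row that holds the labels of a given color, with the junk value `0` at the primed
colors. -/
def row : N7 → ℕ
  | n1 => 1
  | n2 => 2
  | n3 => 3
  | n4 => 4
  | n5 => 5
  | _ => 0

/-- The inverse of `row` on `{1, …, 5}`. -/
def ofRow : ℕ → N7
  | 1 => n1
  | 2 => n2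
  | 3 => n3
  | 4 => n4
  | _ => n5

end N7

namespace P7

open Source

/-- The source of the entry of column `j` in row `0`. -/
def leftSource (j : ℤ) : Source pos7 :=
  if j = -8 then zero else if j ≤ -4 then label ⟨(n5p, 12), by decide⟩
    else label ⟨(n5p, 4), by decide⟩

/-- The source of the entry of column `j` in row `6`. -/
def rightSource (j : ℤ) : Source pos7 :=
  if j ≤ -1 then label ⟨(n5p, 10), by decide⟩
    else if j ≤ 1 then label ⟨(n5p, 6), by decide⟩ else top

/-- Entry `(i, j)` holds the label of the position of color `i` and rank `i + 1 - 2 * j` if there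
is one. Every other entry repeats one of the two boundary entries of its column. -/
def source (p : ST.Idx 5 9) : Source pos7 :=
  if h : p.1.1 ∈ Finset.Icc 1 5 ∧ (ofRow p.1.1, ((p.1.1 : ℤ) + 1 - 2 * p.1.2).toNat) ∈ pos7 then
    label ⟨_, h.2⟩
  else if p.1.1 ≤ 3 ∧ p.1.2 ≤ 0 then leftSource p.1.2 else rightSource p.1.2

theorem row_column_mem_idx : ∀ x ∈ pos7, row x.1 ≤ 5 + 1 ∧
    (row x.1 : ℤ) - (((9 : ℕ) : ℤ) - 1) ≤ ((row x.1 : ℤ) + 1 - x.2) / 2 ∧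
    ((row x.1 : ℤ) + 1 - x.2) / 2 ≤ row x.1 := by
  decide

/-- The entry that holds the label of a position of unprimed color; rank and color have opposite
parity there, so that the division is exact. -/
def target (x : {x // x ∈ pos7}) : ST.Idx 5 9 :=
  ⟨(row x.1.1, ((row x.1.1 : ℤ) + 1 - x.1.2) / 2), row_column_mem_idx x.1 x.2⟩

theorem target_row_eq_iff : ∀ a, ¬ IsPrimed a → ∀ x : {x // x ∈ pos7}, ¬ IsPrimed x.1.1 →
    ((target x).1.1 = row a ↔ x.1.1 = a) := by
  decide +kernel

/-- The layout of the labellings of `P₇` as skew-tabular arrays. -/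
def layout : ArrayLayout adj7 pos7 IsPrimed 5 9 where
  source := source
  target := target
  source_eq_label_iff := by decide +kernel
  source_below_of_column := by decide +kernel
  source_below_of_diagonal := by decide +kernel
  isFixed_boundary := by decide +kernel
  exists_boundary_le := by decide +kernel
  exists_le_boundary := by decide +kernel
  exists_le_top := by decide +kernel
  exists_le_of_step := by decide +kernel

theorem source_row_zero : ∀ p, p.1.1 = 0 → source p = leftSource p.1.2 := by
  decide +kernel

theorem source_row_six : ∀ p, p.1.1 = 5 + 1 → source p = rightSource p.1.2 := by
  decide +kernel

theorem value_leftSource {k : ℕ} (t : L7 k) (j : ℤ) : (leftSource j).value t =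
    if j = -8 then 0 else if j ≤ -4 then t.1 ⟨(n5p, 12), by decide⟩
      else t.1 ⟨(n5p, 4), by decide⟩ := by
  unfold leftSource
  split_ifs <;> rfl

theorem value_rightSource {k : ℕ} (t : L7 k) (j : ℤ) : (rightSource j).value t =
    if j ≤ -1 then t.1 ⟨(n5p, 10), by decide⟩
      else if j ≤ 1 then t.1 ⟨(n5p, 6), by decide⟩ else k := by
  unfold rightSource
  split_ifs <;> rfl

theorem hasBoundary_layout {k : ℕ} (t : L7 k) : layout.HasBoundary t
    (fun j => if j = -8 then 0 else if j ≤ -4 then t.1 ⟨(n5p, 12), by decide⟩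
      else t.1 ⟨(n5p, 4), by decide⟩)
    (fun j => if j ≤ -1 then t.1 ⟨(n5p, 10), by decide⟩
      else if j ≤ 1 then t.1 ⟨(n5p, 6), by decide⟩ else k) :=
  ⟨fun p hp => (congrArg (value t) (source_row_zero p hp)).trans (value_leftSource t p.1.2),
    fun p hp => (congrArg (value t) (source_row_six p hp)).trans (value_rightSource t p.1.2)⟩

theorem edge_iff {k : ℕ} {t : L7 k} {β0 β1 : ℤ → ℕ} (h : layout.HasBoundary t β0 β1) {a : N7}
    (ha : ¬ IsPrimed a) (c d : FixedComponent IsPrimed t) :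
    CL.edge a c.1 d.1 ↔ ST.edge (row a) (ArrayLayout.toArray h c) (ArrayLayout.toArray h d) :=
  ArrayLayout.edge_iff h ha (target_row_eq_iff a ha) c d

end P7

/-- Lemma 4.1: the `J₅`-component of `t` in `L7(k)` is isomorphic, as a
poset with colored covering relations, to a skew-tabular lattice with `n = 5`, `m = 9`. -/
theorem statement_8 (k : ℕ) (t : L7 k) :
    ∃ f : Ct8 k t → ST.Elt 5 9
        (fun j => if j = -8 then 0 else if j ≤ -4 then t.1 ⟨(n5p, 12), by decide⟩
          else t.1 ⟨(n5p, 4), by decide⟩)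
        (fun j => if j ≤ -1 then t.1 ⟨(n5p, 10), by decide⟩
          else if j ≤ 1 then t.1 ⟨(n5p, 6), by decide⟩ else k),
      Function.Bijective f ∧
      (∀ c d : Ct8 k t, CL.elLe c.1 d.1 ↔ ST.le (f c) (f d)) ∧
      ∀ c d : Ct8 k t,
        (CL.edge n1 c.1 d.1 ↔ ST.edge 1 (f c) (f d)) ∧
        (CL.edge n2 c.1 d.1 ↔ ST.edge 2 (f c) (f d)) ∧
        (CL.edge n3 c.1 d.1 ↔ ST.edge 3 (f c) (f d)) ∧
        (CL.edge n4 c.1 d.1 ↔ ST.edge 4 (f c) (f d)) ∧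
        (CL.edge n5 c.1 d.1 ↔ ST.edge 5 (f c) (f d)) := by
  have h := P7.hasBoundary_layout t
  exact ⟨fun c => ArrayLayout.toArray h c, ArrayLayout.toArray_bijective h,
    ArrayLayout.elLe_iff h, fun c d =>
      ⟨P7.edge_iff h (by decide) c d, P7.edge_iff h (by decide) c d, P7.edge_iff h (by decide) c d,
        P7.edge_iff h (by decide) c d, P7.edge_iff h (by decide) c d⟩⟩

end
end
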